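/- arXiv:2008.06401 — 2 statements merged into one kernel-verified Lean document; each statement's English description precedes it below -/
import Mathlib

section
/- For every non-negative integer k, every non-negative integer n, and every j ∈ {2, 4, 5, 6}, the number of (49k+2)-colour partitions of 49n+7j+3 is divisible by 7; that is, p_{49k+2}(49n+7j+3) ≡ 0 (mod 7). -/
/-- `colouredPartitions r n` is the number of `r`-colour partitions of `n`:
multisets of pairs `(m, c)` with `m` a positive integer part and `c` one of `r`
colours, whose parts (first components, with multiplicity) sum to `n`.  Such a
multiset is encoded by its multiplicity function `f : ℕ+ × Fin r →₀ ℕ`. -/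
noncomputable def colouredPartitions (r n : ℕ) : ℕ :=
  Nat.card {f : ℕ+ × Fin r →₀ ℕ // (f.sum fun x m => (x.1 : ℕ) * m) = n}

open Finset
/-- Gaussian binomial -/
def gb {S : Type*} [CommRing S] (q : S) : ℕ → ℕ → S
  | _, 0 => 1
  | 0, _ + 1 => 0
  | n + 1, k + 1 => gb q n (k + 1) + q ^ (n - k) * gb q n k

def qf {S : Type*} [CommRing S] (q : S) (n : ℕ) : S := ∏ i ∈ range n, (1 - q ^ (i + 1))

section
variable {S : Type*} [CommRing S] (q : S)

lemma gb_zero_right (n : ℕ) : gb q n 0 = 1 := by cases n <;> rfl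
lemma gb_succ (n k : ℕ) : gb q (n + 1) (k + 1) = gb q n (k + 1) + q ^ (n - k) * gb q n k := rfl

lemma gb_lt : ∀ n k : ℕ, n < k → gb q n k = 0
  | _, 0, h => by omega
  | 0, k + 1, _ => rfl
  | n + 1, k + 1, h => by
    rw [gb_succ, gb_lt n (k + 1) (by omega), gb_lt n k (by omega)]; simp

lemma qf_succ (n : ℕ) : qf q (n + 1) = qf q n * (1 - q ^ (n + 1)) := by
  simp [qf, prod_range_succ]

lemma gb_mul : ∀ N a b : ℕ, a + b = N → gb q N a * (qf q a * qf q b) = qf q N := by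
  intro N
  induction N with
  | zero =>
    intro a b h
    obtain ⟨rfl, rfl⟩ : a = 0 ∧ b = 0 := by omega
    simp [gb_zero_right, qf]
  | succ N ih =>
    intro a b h
    rcases a with _ | a
    · obtain rfl : b = N + 1 := by omega
      simp [gb_zero_right, qf]
    · rw [gb_succ]
      have hb : N - a = b := by omega
      rw [hb]
      have h2 := ih a b (by omega)
      rcases b with _ | b
      · rw [gb_lt q N (a + 1) (by omega)]
        obtain rfl : a = N := by omega
        simp [qf_succ] at h2 ⊢
        linear_combination (1 - q ^ (a + 1)) * h2
      · have h1 := ih (a + 1) b (by omega)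
        have e : N = a + (b + 1) := by omega
        rw [qf_succ q N, qf_succ q b] 
        rw [qf_succ q b] at h2
        rw [qf_succ q a] at h1 ⊢
        have : q ^ (N + 1) = q ^ (b + 1) * q ^ (a + 1) := by rw [← pow_add]; congr 1; omega
        rw [this]
        linear_combination (1 - q ^ (b + 1)) * h1 + q ^ (b + 1) * (1 - q ^ (a + 1)) * h2

lemma qbinom (y z : S) (N : ℕ) : ∏ i ∈ range N, (y - z * q ^ i) =
    ∑ k ∈ range (N + 1), (-1) ^ k * q ^ (k.choose 2) * gb q N k * z ^ k * y ^ (N - k) := by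
  induction N with
  | zero => simp [gb_zero_right]
  | succ N ih =>
    rw [prod_range_succ, ih]
    rw [sum_range_succ' _ (N + 1)]
    simp only [gb_succ]
    have e : ∀ k ∈ range (N + 1), (-1) ^ (k + 1) * q ^ ((k + 1).choose 2) *
        (gb q N (k + 1) + q ^ (N - k) * gb q N k) * z ^ (k + 1) * y ^ (N + 1 - (k + 1)) =
        ((-1) ^ (k + 1) * q ^ ((k + 1).choose 2) * gb q N (k + 1) * z ^ (k + 1) * y ^ (N - k)) -
        ((-1) ^ k * q ^ (k.choose 2) * gb q N k * z ^ k * y ^ (N - k)) * (z * q ^ N) := by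
      intro k hk
      have hk' : k ≤ N := by simpa [Nat.lt_succ_iff] using hk
      have h1 : (k + 1).choose 2 = k + k.choose 2 := by
        rw [Nat.choose_succ_succ' k 1]; simp
      have h2 : q ^ N = q ^ k * q ^ (N - k) := by rw [← pow_add]; congr 1; omega
      rw [h1, h2, show N + 1 - (k + 1) = N - k by omega]
      ring
    rw [sum_congr rfl e, sum_sub_distrib, ← sum_mul, mul_sub]
    have e2 : (∑ k ∈ range (N + 1), (-1) ^ k * q ^ (k.choose 2) * gb q N k * z ^ k * y ^ (N - k)) * y
        = (∑ k ∈ range (N + 1), (-1) ^ (k + 1) * q ^ ((k + 1).choose 2) * gb q N (k + 1) * z ^ (k + 1) * y ^ (N - k)) + (-1) ^ 0 * q ^ ((0:ℕ).choose 2) * gb q (N + 1) 0 * z ^ 0 * y ^ (N + 1 - 0) := by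
      rw [sum_range_succ', sum_range_succ, gb_lt q N (N + 1) (by omega), add_mul, sum_mul]
      simp only [gb_zero_right]
      have : ∀ k ∈ range N, (-1) ^ (k + 1) * q ^ ((k + 1).choose 2) * gb q N (k + 1) * z ^ (k + 1) * y ^ (N - (k + 1)) * y = (-1) ^ (k + 1) * q ^ ((k + 1).choose 2) * gb q N (k + 1) * z ^ (k + 1) * y ^ (N - k) := by
        intro k hk
        have hk' : k < N := by simpa using hk
        rw [show N - k = N - (k + 1) + 1 by omega]; ring
      rw [sum_congr rfl this]
      simp; ring
    rw [e2]; ring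

lemma gb_map {S' : Type*} [CommRing S'] (f : S →+* S') : ∀ n k, gb (f q) n k = f (gb q n k)
  | n, 0 => by simp [gb_zero_right]
  | 0, k + 1 => by simp [gb]
  | n + 1, k + 1 => by simp [gb_succ, gb_map f n]

/-- differentiated -/
lemma qbinom_deriv (y : S) (N : ℕ) :
    (Polynomial.derivative (∏ i ∈ range N, (Polynomial.C y - Polynomial.X * Polynomial.C (q ^ i)))).eval 1 =
    ∑ k ∈ range (N + 1), (-1) ^ k * q ^ (k.choose 2) * gb q N k * k * y ^ (N - k) := by
  have := qbinom (Polynomial.C q) (Polynomial.C y) Polynomial.X N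
  simp only [← Polynomial.C_pow] at this
  rw [this, Polynomial.derivative_sum, Polynomial.eval_finsetSum]
  refine sum_congr rfl fun k _ => ?_
  rw [show gb (Polynomial.C q) N k = Polynomial.C (gb q N k) from gb_map q Polynomial.C N k]
  rw [show (-1 : Polynomial S) ^ k * Polynomial.C (q ^ k.choose 2) * Polynomial.C (gb q N k) * Polynomial.X ^ k * Polynomial.C (y ^ (N - k)) = Polynomial.C ((-1) ^ k * q ^ (k.choose 2) * gb q N k * y ^ (N - k)) * Polynomial.X ^ k by simp; ring]
  rw [Polynomial.derivative_C_mul_X_pow]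
  simp; ring

lemma lhs_deriv (n : ℕ) :
    (Polynomial.derivative (∏ i ∈ range (2 * n + 1), (Polynomial.C (q ^ n) - Polynomial.X * Polynomial.C (q ^ i)))).eval 1 =
    (-1) ^ (n + 1) * q ^ (n.choose 2 + n + n * n) * qf q n ^ 2 := by
  rw [show 2 * n + 1 = (n + 1) + n by ring, prod_range_add, prod_range_succ, mul_right_comm,
    Polynomial.derivative_mul]
  have e1 : (∏ i ∈ range n, (q ^ n - q ^ i)) = (-1) ^ n * q ^ (n.choose 2) * qf q n := by
    rw [← prod_range_reflect]
    have : ∀ j ∈ range n, q ^ n - q ^ (n - 1 - j) = (-1) * q ^ (n - 1 - j) * (1 - q ^ (j + 1)) := by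
      intro j hj
      have hj' : j < n := by simpa using hj
      have : q ^ n = q ^ (n - 1 - j) * q ^ (j + 1) := by rw [← pow_add]; congr 1; omega
      rw [this]; ring
    rw [prod_congr rfl this, prod_mul_distrib, prod_mul_distrib, qf, prod_range_reflect (fun j => q ^ j) n,
      prod_pow_eq_pow_sum, Finset.sum_range_id, Nat.choose_two_right]
    simp
  have e2 : (∏ i ∈ range n, (q ^ n - q ^ (n + 1 + i))) = q ^ (n * n) * qf q n := by
    have : ∀ j ∈ range n, q ^ n - q ^ (n + 1 + j) = q ^ n * (1 - q ^ (j + 1)) := by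
      intro j hj; ring
    rw [prod_congr rfl this, prod_mul_distrib, qf]
    simp [pow_mul]
  simp [Polynomial.eval_prod, e1, e2]
  ring
end

lemma tc (n : ℕ) : 2 * n.choose 2 + n = n * n := by
  induction n with
  | zero => rfl
  | succ n ih => rw [Nat.choose_succ_succ' n 1]; simp; nlinarith

lemma jacobi_fin {S : Type*} [CommRing S] [IsDomain S] (q : S) (hq : q ≠ 0) (hf : ∀ m, qf q m ≠ 0) (n : ℕ) :
    qf q n ^ 2 = ∑ j ∈ range (n + 1), (-1) ^ j * (2 * j + 1) * q ^ ((j + 1).choose 2) * gb q (2 * n + 1) (n - j) := by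
  have h := (lhs_deriv q n).symm.trans (qbinom_deriv q (q ^ n) (2 * n + 1))
  have hsym : ∀ j, j ≤ n → gb q (2 * n + 1) (n + 1 + j) = gb q (2 * n + 1) (n - j) := by
    intro j hj
    have h1 := gb_mul q (2 * n + 1) (n + 1 + j) (n - j) (by omega)
    have h2 := gb_mul q (2 * n + 1) (n - j) (n + 1 + j) (by omega)
    apply mul_right_cancel₀ (mul_ne_zero (hf (n + 1 + j)) (hf (n - j)))
    rw [h1, mul_comm (qf q (n + 1 + j)), h2]
  have h0 : (-1) ^ (n + 1) * q ^ (n.choose 2 + n + n * n) ≠ 0 := by simp [hq]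
  apply mul_left_cancel₀ h0
  rw [h, show 2 * n + 1 + 1 = (n + 1) + (n + 1) by ring, sum_range_add, ← sum_range_reflect, ← sum_add_distrib, mul_sum]
  refine sum_congr rfl fun j hj => ?_
  have hj' : j ≤ n := by simpa [Nat.lt_succ_iff] using hj
  rw [show n + 1 - 1 - j = n - j by omega]
  rw [hsym j hj']
  obtain ⟨m, rfl⟩ : ∃ m, n = m + j := ⟨n - j, by omega⟩
  simp only [Nat.add_sub_cancel]
  have c1 : m.choose 2 + (m + j) * (2 * (m + j) + 1 - m) = (m + j).choose 2 + (m + j) + (m + j) * (m + j) + (j + 1).choose 2 := by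
    have t1 := tc m
    have t2 := tc (m + j)
    have t3 := tc (j + 1)
    rw [show 2 * (m + j) + 1 - m = m + 2 * j + 1 by omega]
    nlinarith
  have c2 : (m + j + 1 + j).choose 2 + (m + j) * (2 * (m + j) + 1 - (m + j + 1 + j)) = (m + j).choose 2 + (m + j) + (m + j) * (m + j) + (j + 1).choose 2 := by
    have t1 := tc (m + j + 1 + j)
    have t2 := tc (m + j)
    have t3 := tc (j + 1)
    rw [show 2 * (m + j) + 1 - (m + j + 1 + j) = m by omega]
    nlinarith
  simp only [← pow_mul]
  have s1 : ((-1 : S) ^ m) = (-1) ^ (m + j) * (-1) ^ j := by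
    rw [pow_add, mul_assoc, ← mul_pow]; simp
  have s2 : ((-1 : S) ^ (m + j + 1 + j)) = - ((-1) ^ (m + j) * (-1) ^ j) := by
    rw [pow_add, pow_succ]; ring
  rw [s1, s2]
  have d1 := congrArg (fun e => q ^ e) c1
  have d2 := congrArg (fun e => q ^ e) c2
  rw [pow_add] at d1 d2
  rw [pow_add _ _ ((j+1).choose 2)] at d1 d2
  push_cast
  generalize gb q _ _ = g
  linear_combination ((-1) ^ (m + j) * (-1) ^ j * m * g) * d1 - ((-1) ^ (m + j) * (-1) ^ j * g * (m + j + 1 + j)) * d2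

open Finset PowerSeries

noncomputable abbrev EE : (ZMod 7)⟦X⟧ := PowerSeries.pentagonalSeries (ZMod 7)
instance fact7 : Fact (Nat.Prime 7) := ⟨by norm_num⟩

lemma prod_sub_one_dvd (n : ℕ) (s : Finset ℕ) (hs : ∀ i ∈ s, n ≤ i) :
    (X : (ZMod 7)⟦X⟧) ^ (n + 1) ∣ (∏ i ∈ s, (1 - X ^ (i + 1))) - 1 := by
  induction s using Finset.induction_on with
  | empty => simp
  | insert a s ha ih =>
    rw [prod_insert ha]
    have h1 := ih (fun i hi => hs i (mem_insert_of_mem hi))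
    have h2 : (X : (ZMod 7)⟦X⟧) ^ (n + 1) ∣ X ^ (a + 1) :=
      pow_dvd_pow _ (by have := hs a (mem_insert_self _ _); omega)
    rw [show (1 - X ^ (a + 1)) * (∏ i ∈ s, (1 - X ^ (i + 1))) - 1 = ((∏ i ∈ s, (1 - X ^ (i + 1))) - 1) - X ^ (a + 1) * (∏ i ∈ s, (1 - (X : (ZMod 7)⟦X⟧) ^ (i + 1))) by ring]
    exact dvd_sub h1 (h2.mul_right _)

lemma E_sub_qf (n : ℕ) : (X : (ZMod 7)⟦X⟧) ^ (n + 1) ∣ EE - qf X n := by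
  rw [X_pow_dvd_iff]
  intro m hm
  have h := PowerSeries.coeff_prod_one_sub_X_pow_eventually_eq (ZMod 7) m
  obtain ⟨s, hs⟩ := Filter.eventually_atTop.mp h
  have h1 := hs (s ∪ range n) (by simp)
  rw [map_sub, ← h1, ← map_sub]
  have : ∏ i ∈ s ∪ range n, (1 - (X : (ZMod 7)⟦X⟧) ^ (i + 1)) - qf X n =
      qf X n * ((∏ i ∈ (s ∪ range n) \ range n, (1 - (X : (ZMod 7)⟦X⟧) ^ (i + 1))) - 1) := by
    rw [← prod_sdiff (subset_union_right : range n ⊆ s ∪ range n), qf]; ring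
  rw [this]
  refine (X_pow_dvd_iff.mp (Dvd.dvd.mul_left (prod_sub_one_dvd n _ ?_) _)) m hm
  intro i hi
  simp at hi
  exact hi.2

lemma constE : constantCoeff EE = 1 := by
  have := X_pow_dvd_iff.mp (E_sub_qf 0) 0 (by norm_num)
  simp [qf] at this
  exact sub_eq_zero.mp this

lemma unitE : IsUnit EE := by
  rw [PowerSeries.isUnit_iff_constantCoeff, constE]; exact isUnit_one

lemma qf_ne (m : ℕ) : qf (X : (ZMod 7)⟦X⟧) m ≠ 0 := by
  rw [qf, prod_ne_zero_iff]
  intro i _ h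
  have := congrArg (coeff 0) h
  simp at this

lemma gbE (n j : ℕ) (hj : j ≤ n) :
    (X : (ZMod 7)⟦X⟧) ^ (n - j + 1) ∣ EE * gb X (2 * n + 1) (n - j) - 1 := by
  have h := gb_mul (X : (ZMod 7)⟦X⟧) (2 * n + 1) (n - j) (n + 1 + j) (by omega)
  have h1 := E_sub_qf (n - j)
  have h2 := (pow_dvd_pow X (by omega : n - j + 1 ≤ n + 1 + j + 1)).trans (E_sub_qf (n + 1 + j))
  have h3 := (pow_dvd_pow X (by omega : n - j + 1 ≤ 2 * n + 1 + 1)).trans (E_sub_qf (2 * n + 1))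
  rw [← unitE.dvd_mul_left]
  set g := gb (X : (ZMod 7)⟦X⟧) (2 * n + 1) (n - j)
  rw [show EE * (EE * g - 1) = (EE - qf X (n - j)) * (EE * g) + (EE - qf X (n + 1 + j)) * (qf X (n - j) * g) - (EE - qf X (2 * n + 1)) by rw [← h]; ring]
  exact dvd_sub (dvd_add (h1.mul_right _) (h2.mul_right _)) h3

lemma jacobi (n : ℕ) : (X : (ZMod 7)⟦X⟧) ^ (n + 1) ∣
    EE ^ 3 - ∑ j ∈ range (n + 1), (-1 : (ZMod 7)⟦X⟧) ^ j * (2 * (j : (ZMod 7)⟦X⟧) + 1) * X ^ ((j + 1).choose 2) := by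
  have h := jacobi_fin (X : (ZMod 7)⟦X⟧) X_ne_zero qf_ne n
  have h1 := E_sub_qf n
  rw [show EE ^ 3 - ∑ j ∈ range (n + 1), (-1 : (ZMod 7)⟦X⟧) ^ j * (2 * (j : (ZMod 7)⟦X⟧) + 1) * X ^ ((j + 1).choose 2)
    = (EE - qf X n) * (EE * (EE + qf X n)) + ∑ j ∈ range (n + 1), (-1 : (ZMod 7)⟦X⟧) ^ j * (2 * (j : (ZMod 7)⟦X⟧) + 1) * (X ^ ((j + 1).choose 2) * (EE * gb X (2 * n + 1) (n - j) - 1)) from ?_]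
  · refine dvd_add (h1.mul_right _) (dvd_sum fun j hj => Dvd.dvd.mul_left ?_ _)
    have hj' : j ≤ n := by simpa [Nat.lt_succ_iff] using hj
    have : (X : (ZMod 7)⟦X⟧) ^ (n + 1) ∣ X ^ ((j + 1).choose 2 + (n - j + 1)) := by
      apply pow_dvd_pow
      have : (j + 1).choose 2 = j + j.choose 2 := by rw [Nat.choose_succ_succ' j 1]; simp
      omega
    refine this.trans ?_
    rw [pow_add]
    exact mul_dvd_mul_left _ (gbE n j hj')
  · have : ∑ j ∈ range (n + 1), (-1 : (ZMod 7)⟦X⟧) ^ j * (2 * (j : (ZMod 7)⟦X⟧) + 1) * (X ^ ((j + 1).choose 2) * (EE * gb X (2 * n + 1) (n - j) - 1)) = EE * (qf X n) ^ 2 - ∑ j ∈ range (n + 1), (-1 : (ZMod 7)⟦X⟧) ^ j * (2 * (j : (ZMod 7)⟦X⟧) + 1) * X ^ ((j + 1).choose 2) := by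
      rw [h, mul_sum, ← sum_sub_distrib]
      refine sum_congr rfl fun j _ => ?_
      ring
    rw [this]; ring

lemma E3_supp (n : ℕ) (h : n % 7 ≠ 0 ∧ n % 7 ≠ 1 ∧ n % 7 ≠ 3) : coeff n (EE ^ 3) = 0 := by
  have := X_pow_dvd_iff.mp (jacobi n) n (by omega)
  rw [map_sub, sub_eq_zero] at this
  rw [this, map_sum]
  refine sum_eq_zero fun j _ => ?_
  rw [show ((-1 : (ZMod 7)⟦X⟧) ^ j * (2 * (j : (ZMod 7)⟦X⟧) + 1) * X ^ ((j + 1).choose 2) : (ZMod 7)⟦X⟧) = C ((-1) ^ j * (2 * (j : ZMod 7) + 1)) * X ^ ((j + 1).choose 2) by simp [map_ofNat], coeff_C_mul, coeff_X_pow]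
  split_ifs with hn
  · have t := tc (j + 1)
    rw [← hn] at t
    have : (2 * n + (j + 1)) % 7 = ((j + 1) * (j + 1)) % 7 := by rw [t]
    have h3 : j % 7 = 3 := by
      rw [Nat.mul_mod] at this
      have hl : j % 7 < 7 := Nat.mod_lt _ (by norm_num)
      have h5 : (j + 1) % 7 = (j % 7 + 1) % 7 := by omega
      rw [h5] at this
      generalize hm : j % 7 = m at *
      interval_cases m <;> simp at * <;> omega
    have : (2 * (j : ZMod 7) + 1) = 0 := by
      have e : ((2 * j + 1 : ℕ) : ZMod 7) = 0 := by
        rw [ZMod.natCast_eq_zero_iff]; omega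
      exact_mod_cast e
    rw [this]; simp
  · simp

open Finset PowerSeries

def Cl (r : ZMod 7) (f : (ZMod 7)⟦X⟧) : Prop := ∀ n : ℕ, (n : ZMod 7) ≠ r → coeff n f = 0

noncomputable def pr (r : ZMod 7) : (ZMod 7)⟦X⟧ →ₗ[ZMod 7] (ZMod 7)⟦X⟧ where
  toFun f := PowerSeries.mk fun n => if (n : ZMod 7) = r then coeff n f else 0
  map_add' f g := by ext n; simp; split_ifs <;> simp
  map_smul' c f := by ext n; simp

lemma coeff_pr (r : ZMod 7) (f) (n : ℕ) : coeff n (pr r f) = if (n : ZMod 7) = r then coeff n f else 0 := by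
  simp [pr]

lemma Cl_pr (r f) : Cl r (pr r f) := fun n hn => by rw [coeff_pr, if_neg hn]

lemma pr_of_Cl {r f} (h : Cl r f) : pr r f = f := by
  ext n; rw [coeff_pr]; split_ifs with hn
  · rfl
  · exact (h n hn).symm

lemma pr_of_Cl_ne {r s f} (h : Cl s f) (hrs : s ≠ r) : pr r f = 0 := by
  ext n; rw [coeff_pr]; split_ifs with hn
  · rw [h n (by rw [hn]; exact hrs.symm)]; simp
  · simp

lemma Cl_mul {r s f g} (hf : Cl r f) (hg : Cl s g) : Cl (r + s) (f * g) := by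
  intro n hn
  rw [coeff_mul]
  refine sum_eq_zero fun p hp => ?_
  rw [HasAntidiagonal.mem_antidiagonal] at hp
  by_cases h1 : (p.1 : ZMod 7) = r
  · by_cases h2 : (p.2 : ZMod 7) = s
    · exfalso; apply hn; rw [← hp]; push_cast; rw [h1, h2]
    · rw [hg _ h2, mul_zero]
  · rw [hf _ h1, zero_mul]

lemma Cl_one : Cl 0 1 := by
  intro n hn
  rw [coeff_one, if_neg]
  rintro rfl; simp at hn

lemma Cl_pow {r f} (hf : Cl r f) (k : ℕ) : Cl (k * r) (f ^ k) := by
  induction k with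
  | zero => simpa using Cl_one
  | succ k ih =>
    rw [pow_succ]
    have := Cl_mul ih hf
    convert this using 1
    push_cast; ring

lemma pr_mul {r f h} (hh : Cl 0 h) : pr r (h * f) = h * pr r f := by
  ext n
  rw [coeff_pr, coeff_mul, coeff_mul]
  split_ifs with hn
  · refine sum_congr rfl fun p hp => ?_
    rw [HasAntidiagonal.mem_antidiagonal] at hp
    by_cases h1 : (p.1 : ZMod 7) = 0
    · rw [coeff_pr, if_pos]
      rw [← hn, ← hp]; push_cast; rw [h1, zero_add]
    · rw [hh _ h1]; simp
  · symm
    refine sum_eq_zero fun p hp => ?_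
    rw [HasAntidiagonal.mem_antidiagonal] at hp
    by_cases h1 : (p.1 : ZMod 7) = 0
    · rw [coeff_pr, if_neg]; · simp
      intro h2; apply hn
      rw [← h2, ← hp]; push_cast; rw [h1, zero_add]
    · rw [hh _ h1]; simp

noncomputable def mo (a b c d : (ZMod 7)⟦X⟧) (e : ZMod 7) (i j k l : ℕ) : (ZMod 7)⟦X⟧ :=
  C e * (a ^ i * b ^ j * c ^ k * d ^ l)

section
variable {a b c d : (ZMod 7)⟦X⟧} (ha : Cl 0 a) (hb : Cl 1 b) (hc : Cl 2 c) (hd : Cl 5 d)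
include ha hb hc hd

lemma pr_mon (r e : ZMod 7) (i j k l : ℕ) : pr r (mo a b c d e i j k l) =
    if ((j + k * 2 + l * 5 : ℕ) : ZMod 7) = r then mo a b c d e i j k l else 0 := by
  have h : Cl ((j + k * 2 + l * 5 : ℕ) : ZMod 7) (mo a b c d e i j k l) := by
    rw [mo]
    have h0 : Cl 0 (C e : (ZMod 7)⟦X⟧) := by
      intro n hn
      rw [coeff_C, if_neg]
      rintro rfl; simp at hn
    have := Cl_mul h0 (Cl_mul (Cl_mul (Cl_mul (Cl_pow ha i) (Cl_pow hb j)) (Cl_pow hc k)) (Cl_pow hd l))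
    convert this using 1
    push_cast; ring
  split_ifs with h1
  · exact pr_of_Cl (h1 ▸ h)
  · exact pr_of_Cl_ne h h1

omit ha hb hc hd in
lemma pr_cube (r : ZMod 7) : pr r ((a + b + c + d) ^ 3) =
    pr r (mo a b c d 1 3 0 0 0 +
      mo a b c d 3 2 1 0 0 +
      mo a b c d 3 2 0 1 0 +
      mo a b c d 3 2 0 0 1 +
      mo a b c d 3 1 2 0 0 +
      mo a b c d 6 1 1 1 0 +
      mo a b c d 6 1 1 0 1 +
      mo a b c d 3 1 0 2 0 +
      mo a b c d 6 1 0 1 1 +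
      mo a b c d 3 1 0 0 2 +
      mo a b c d 1 0 3 0 0 +
      mo a b c d 3 0 2 1 0 +
      mo a b c d 3 0 2 0 1 +
      mo a b c d 3 0 1 2 0 +
      mo a b c d 6 0 1 1 1 +
      mo a b c d 3 0 1 0 2 +
      mo a b c d 1 0 0 3 0 +
      mo a b c d 3 0 0 2 1 +
      mo a b c d 3 0 0 1 2 +
      mo a b c d 1 0 0 0 3) := by
  congr 1
  simp only [mo, map_ofNat, map_one]
  ring

lemma rel2 (h : pr 2 ((a + b + c + d) ^ 3) = 0) : a ^ 2 * c + a * b ^ 2 + c ^ 2 * d = 0 := by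
  have h7 : (7 : (ZMod 7)⟦X⟧) = 0 := by
    have : (7 : ZMod 7) = 0 := by decide
    rw [← map_ofNat (C : ZMod 7 →+* (ZMod 7)⟦X⟧), this, map_zero]
  rw [pr_cube] at h
  simp only [map_add, pr_mon ha hb hc hd] at h
  simp (decide := true) only [if_true, if_false, add_zero, zero_add] at h
  simp only [mo, map_ofNat, map_one] at h
  linear_combination 5 * h - (2 * (a ^ 2 * c + a * b ^ 2 + c ^ 2 * d)) * h7

lemma rel4 (h : pr 4 ((a + b + c + d) ^ 3) = 0) : a * c ^ 2 + b ^ 2 * c + b * d ^ 2 = 0 := by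
  have h7 : (7 : (ZMod 7)⟦X⟧) = 0 := by
    have : (7 : ZMod 7) = 0 := by decide
    rw [← map_ofNat (C : ZMod 7 →+* (ZMod 7)⟦X⟧), this, map_zero]
  rw [pr_cube] at h
  simp only [map_add, pr_mon ha hb hc hd] at h
  simp (decide := true) only [if_true, if_false, add_zero, zero_add] at h
  simp only [mo, map_ofNat, map_one] at h
  linear_combination 5 * h - (2 * (a * c ^ 2 + b ^ 2 * c + b * d ^ 2)) * h7

lemma rel5 (h : pr 5 ((a + b + c + d) ^ 3) = 0) : a ^ 2 * d + b * c ^ 2 + c * d ^ 2 = 0 := by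
  have h7 : (7 : (ZMod 7)⟦X⟧) = 0 := by
    have : (7 : ZMod 7) = 0 := by decide
    rw [← map_ofNat (C : ZMod 7 →+* (ZMod 7)⟦X⟧), this, map_zero]
  rw [pr_cube] at h
  simp only [map_add, pr_mon ha hb hc hd] at h
  simp (decide := true) only [if_true, if_false, add_zero, zero_add] at h
  simp only [mo, map_ofNat, map_one] at h
  linear_combination 5 * h - (2 * (a ^ 2 * d + b * c ^ 2 + c * d ^ 2)) * h7

lemma rel6 (h : pr 6 ((a + b + c + d) ^ 3) = 0) : c ^ 3 - a * b * d = 0 := by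
  have h7 : (7 : (ZMod 7)⟦X⟧) = 0 := by
    have : (7 : ZMod 7) = 0 := by decide
    rw [← map_ofNat (C : ZMod 7 →+* (ZMod 7)⟦X⟧), this, map_zero]
  rw [pr_cube] at h
  simp only [map_add, pr_mon ha hb hc hd] at h
  simp (decide := true) only [if_true, if_false, add_zero, zero_add] at h
  simp only [mo, map_ofNat, map_one] at h
  linear_combination h - (a * b * d) * h7

set_option maxHeartbeats 1000000 in
lemma pr_five : pr 3 ((a + b + c + d) ^ 5) = (1) * c ^ 5 + (10) * b ^ 2 * d ^ 3 + (20) * b ^ 3 * c ^ 1 * d ^ 1 + (20) * a ^ 1 * c ^ 1 * d ^ 3 + (60) * a ^ 1 * b ^ 1 * c ^ 2 * d ^ 1 + (10) * a ^ 2 * b ^ 3 + (10) * a ^ 3 * d ^ 2 + (20) * a ^ 3 * b ^ 1 * c ^ 1 := by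
  have e : (a + b + c + d) ^ 5 = mo a b c d 1 5 0 0 0 +
      mo a b c d 5 4 1 0 0 +
      mo a b c d 5 4 0 1 0 +
      mo a b c d 5 4 0 0 1 +
      mo a b c d 10 3 2 0 0 +
      mo a b c d 20 3 1 1 0 +
      mo a b c d 20 3 1 0 1 +
      mo a b c d 10 3 0 2 0 +
      mo a b c d 20 3 0 1 1 +
      mo a b c d 10 3 0 0 2 +
      mo a b c d 10 2 3 0 0 +
      mo a b c d 30 2 2 1 0 +
      mo a b c d 30 2 2 0 1 +
      mo a b c d 30 2 1 2 0 +
      mo a b c d 60 2 1 1 1 +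
      mo a b c d 30 2 1 0 2 +
      mo a b c d 10 2 0 3 0 +
      mo a b c d 30 2 0 2 1 +
      mo a b c d 30 2 0 1 2 +
      mo a b c d 10 2 0 0 3 +
      mo a b c d 5 1 4 0 0 +
      mo a b c d 20 1 3 1 0 +
      mo a b c d 20 1 3 0 1 +
      mo a b c d 30 1 2 2 0 +
      mo a b c d 60 1 2 1 1 +
      mo a b c d 30 1 2 0 2 +
      mo a b c d 20 1 1 3 0 +
      mo a b c d 60 1 1 2 1 +
      mo a b c d 60 1 1 1 2 +
      mo a b c d 20 1 1 0 3 +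
      mo a b c d 5 1 0 4 0 +
      mo a b c d 20 1 0 3 1 +
      mo a b c d 30 1 0 2 2 +
      mo a b c d 20 1 0 1 3 +
      mo a b c d 5 1 0 0 4 +
      mo a b c d 1 0 5 0 0 +
      mo a b c d 5 0 4 1 0 +
      mo a b c d 5 0 4 0 1 +
      mo a b c d 10 0 3 2 0 +
      mo a b c d 20 0 3 1 1 +
      mo a b c d 10 0 3 0 2 +
      mo a b c d 10 0 2 3 0 +
      mo a b c d 30 0 2 2 1 +
      mo a b c d 30 0 2 1 2 +
      mo a b c d 10 0 2 0 3 +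
      mo a b c d 5 0 1 4 0 +
      mo a b c d 20 0 1 3 1 +
      mo a b c d 30 0 1 2 2 +
      mo a b c d 20 0 1 1 3 +
      mo a b c d 5 0 1 0 4 +
      mo a b c d 1 0 0 5 0 +
      mo a b c d 5 0 0 4 1 +
      mo a b c d 10 0 0 3 2 +
      mo a b c d 10 0 0 2 3 +
      mo a b c d 5 0 0 1 4 +
      mo a b c d 1 0 0 0 5 := by
    simp only [mo, map_ofNat, map_one]
    ring
  rw [e]
  simp only [map_add, pr_mon ha hb hc hd]
  simp (decide := true) only [if_true, if_false, add_zero, zero_add]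
  simp only [mo, map_ofNat, map_one]
  ring
end

lemma alg {R : Type*} [CommRing R] (a b c d : R) (h7 : (7 : R) = 0)
    (r2 : a ^ 2 * c + a * b ^ 2 + c ^ 2 * d = 0) (r4 : a * c ^ 2 + b ^ 2 * c + b * d ^ 2 = 0)
    (r5 : a ^ 2 * d + b * c ^ 2 + c * d ^ 2 = 0) (r6 : c ^ 3 - a * b * d = 0) :
    ((1) * c ^ 5 + (10) * b ^ 2 * d ^ 3 + (20) * b ^ 3 * c ^ 1 * d ^ 1 + (20) * a ^ 1 * c ^ 1 * d ^ 3 + (60) * a ^ 1 * b ^ 1 * c ^ 2 * d ^ 1 + (10) * a ^ 2 * b ^ 3 + (10) * a ^ 3 * d ^ 2 + (20) * a ^ 3 * b ^ 1 * c ^ 1) ^ 2 + 2 * c ^ 3 * (a ^ 7 + b ^ 7 + c ^ 7 + d ^ 7) = 0 := by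
  linear_combination ((2) * c ^ 1 * d ^ 6 + (3) * b ^ 1 * c ^ 2 * d ^ 4 + (3) * b ^ 2 * c ^ 3 * d ^ 2 + (-1) * b ^ 3 * c ^ 4 + (1) * a ^ 1 * c ^ 4 * d ^ 2 + (-2) * a ^ 1 * b ^ 1 * c ^ 5 + (1) * a ^ 1 * b ^ 3 * d ^ 3 + (2) * a ^ 1 * b ^ 4 * c ^ 1 * d ^ 1 + (-1) * a ^ 2 * d ^ 5 + (-3) * a ^ 2 * b ^ 1 * c ^ 1 * d ^ 3 + (-2) * a ^ 2 * b ^ 2 * c ^ 2 * d ^ 1 + (-2) * a ^ 3 * c ^ 3 * d ^ 1 + (2) * a ^ 3 * b ^ 4 + (1) * a ^ 4 * b ^ 1 * d ^ 2 + (3) * a ^ 4 * b ^ 2 * c ^ 1 + (2) * a ^ 5 * c ^ 2) * r2 +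
    ((-3) * c ^ 4 * d ^ 3 + (-1) * b ^ 1 * c ^ 5 * d ^ 1 + (2) * b ^ 3 * d ^ 4 + (-1) * b ^ 4 * c ^ 1 * d ^ 2 + (-1) * b ^ 5 * c ^ 2 + (-1) * a ^ 1 * b ^ 1 * c ^ 1 * d ^ 4 + (2) * a ^ 1 * b ^ 3 * c ^ 3 + (3) * a ^ 2 * b ^ 4 * d ^ 1 + (-2) * a ^ 3 * b ^ 1 * d ^ 3 + (3) * a ^ 5 * b ^ 2) * r4 + ((3) * b ^ 6 * c ^ 1 + (2) * a ^ 4 * d ^ 3) * r5 + ((3) * c ^ 7) * r6 +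
    ((3) * b ^ 2 * c ^ 5 * d ^ 3 + (6) * b ^ 3 * c ^ 6 * d ^ 1 + (6) * a ^ 1 * c ^ 6 * d ^ 3 + (18) * a ^ 1 * b ^ 1 * c ^ 7 * d ^ 1 + (3) * a ^ 2 * b ^ 3 * c ^ 5 + (3) * a ^ 3 * c ^ 5 * d ^ 2 + (6) * a ^ 3 * b ^ 1 * c ^ 6 + (14) * b ^ 4 * d ^ 6 + (57) * b ^ 5 * c ^ 1 * d ^ 4 + (57) * a ^ 1 * b ^ 2 * c ^ 1 * d ^ 6 + (285) * a ^ 1 * b ^ 3 * c ^ 2 * d ^ 4 + (28) * a ^ 2 * b ^ 5 * d ^ 3 + (29) * a ^ 3 * b ^ 2 * d ^ 5 + (172) * a ^ 3 * b ^ 3 * c ^ 1 * d ^ 3 + (57) * b ^ 6 * c ^ 2 * d ^ 2 + (342) * a ^ 1 * b ^ 4 * c ^ 3 * d ^ 2 + (56) * a ^ 2 * b ^ 6 * c ^ 1 * d ^ 1 + (285) * a ^ 3 * b ^ 4 * c ^ 2 * d ^ 1 + (57) * a ^ 2 * c ^ 2 * d ^ 6 + (343) * a ^ 2 * b ^ 1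 * c ^ 3 * d ^ 4 + (57) * a ^ 4 * c ^ 1 * d ^ 5 + (286) * a ^ 4 * b ^ 1 * c ^ 2 * d ^ 3 + (514) * a ^ 2 * b ^ 2 * c ^ 4 * d ^ 2 + (343) * a ^ 4 * b ^ 2 * c ^ 3 * d ^ 1 + (14) * a ^ 4 * b ^ 6 + (28) * a ^ 5 * b ^ 3 * d ^ 2 + (56) * a ^ 5 * b ^ 4 * c ^ 1 + (14) * a ^ 6 * d ^ 4 + (57) * a ^ 6 * b ^ 1 * c ^ 1 * d ^ 2 + (56) * a ^ 6 * b ^ 2 * c ^ 2) * h7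

open Finset PowerSeries

noncomputable def wcount {ι : Type*} (w : ι → ℕ) (n : ℕ) : ℕ :=
  Nat.card {f : ι →₀ ℕ // (f.sum fun x m => w x * m) = n}

lemma wcount_fin_pnat (n : ℕ) : Finite {f : ℕ+ →₀ ℕ // (f.sum fun x m => (x : ℕ) * m) = n} := by
  have : Set.Finite {f : ℕ+ →₀ ℕ | (f.sum fun x m => (x : ℕ) * m) = n} := by
    apply Set.Finite.subset (Finset.finite_toSet (((Finset.range (n + 1)).image (Nat.succPNat)).finsupp (fun _ => Finset.range (n + 1))))
    intro f hf
    simp only [Set.mem_ofPred_eq] at hf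
    have key : ∀ x ∈ f.support, (x : ℕ) * f x ≤ n := by
      intro x hx
      rw [← hf, Finsupp.sum]
      exact Finset.single_le_sum (f := fun x : ℕ+ => (x : ℕ) * f x) (fun _ _ => Nat.zero_le _) hx
    simp only [Finset.mem_coe, Finset.mem_finsupp_iff]
    constructor
    · intro x hx
      have := key x hx
      have h1 : 0 < f x := Nat.pos_of_ne_zero (by simpa using hx)
      simp only [Finset.mem_image, Finset.mem_range]
      refine ⟨x.natPred, ?_, by simp⟩
      have : (x : ℕ) ≤ n := by nlinarith
      have := x.natPred_add_one
      omega
    · intro x _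
      by_cases hx : x ∈ f.support
      · have := key x hx
        have := x.pos
        simp only [Finset.mem_range]
        nlinarith
      · simp at hx; simp [hx]
  exact this

lemma wcount_equiv {ι κ : Type*} (e : ι ≃ κ) (w : κ → ℕ) (n : ℕ) :
    wcount (fun x => w (e x)) n = wcount w n := by
  apply Nat.card_congr
  refine (Finsupp.domCongr e).toEquiv.subtypeEquiv ?_
  intro f
  simp [Finsupp.domCongr_apply, Finsupp.equivMapDomain_eq_mapDomain, Finsupp.sum_mapDomain_index_inj e.injective]

lemma sum_finsupp {ι κ : Type*} (w : ι ⊕ κ → ℕ) (f : ι ⊕ κ →₀ ℕ) :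
    (f.sum fun x m => w x * m) = ((Finsupp.sumFinsuppEquivProdFinsupp f).1.sum fun x m => w (.inl x) * m) +
      ((Finsupp.sumFinsuppEquivProdFinsupp f).2.sum fun x m => w (.inr x) * m) := by
  obtain ⟨⟨g, h⟩, rfl⟩ := Finsupp.sumFinsuppEquivProdFinsupp.symm.surjective f
  rw [Equiv.apply_symm_apply]
  simp only [Finsupp.sumFinsuppEquivProdFinsupp_symm_apply]
  exact Finsupp.sum_sumElim ..

lemma sig_ext {ι κ : Type*} (w : ι ⊕ κ → ℕ) (n : ℕ)
    (x y : Σ p : antidiagonal n, {f : ι →₀ ℕ // (f.sum fun x m => w (.inl x) * m) = p.1.1} ×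
      {f : κ →₀ ℕ // (f.sum fun x m => w (.inr x) * m) = p.1.2})
    (h1 : x.2.1.1 = y.2.1.1) (h2 : x.2.2.1 = y.2.2.1) : x = y := by
  obtain ⟨⟨⟨i, j⟩, hp⟩, ⟨f, hf⟩, ⟨g, hg⟩⟩ := x
  obtain ⟨⟨⟨i', j'⟩, hp'⟩, ⟨f', hf'⟩, ⟨g', hg'⟩⟩ := y
  simp only at h1 h2 hf hg hf' hg'
  subst h1 h2 hf hg hf' hg'
  rfl

/-- splitting -/
noncomputable def splitEquiv {ι κ : Type*} (w : ι ⊕ κ → ℕ) (n : ℕ) :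
    {f : ι ⊕ κ →₀ ℕ // (f.sum fun x m => w x * m) = n} ≃
    Σ p : antidiagonal n, {f : ι →₀ ℕ // (f.sum fun x m => w (.inl x) * m) = p.1.1} ×
      {f : κ →₀ ℕ // (f.sum fun x m => w (.inr x) * m) = p.1.2} where
  toFun f := ⟨⟨(((Finsupp.sumFinsuppEquivProdFinsupp f.1).1.sum fun x m => w (.inl x) * m),
      ((Finsupp.sumFinsuppEquivProdFinsupp f.1).2.sum fun x m => w (.inr x) * m)), by
        rw [HasAntidiagonal.mem_antidiagonal, ← sum_finsupp, f.2]⟩,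
      ⟨(Finsupp.sumFinsuppEquivProdFinsupp f.1).1, rfl⟩, ⟨(Finsupp.sumFinsuppEquivProdFinsupp f.1).2, rfl⟩⟩
  invFun p := ⟨Finsupp.sumFinsuppEquivProdFinsupp.symm (p.2.1.1, p.2.2.1), by
    rw [sum_finsupp, Equiv.apply_symm_apply, p.2.1.2, p.2.2.2]
    exact HasAntidiagonal.mem_antidiagonal.mp p.1.2⟩
  left_inv f := by simp
  right_inv p := by
    apply sig_ext <;> simp

lemma wcount_sum {ι κ : Type*} (w : ι ⊕ κ → ℕ) (n : ℕ)
    (h1 : ∀ n, Finite {f : ι →₀ ℕ // (f.sum fun x m => w (.inl x) * m) = n})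
    (h2 : ∀ n, Finite {f : κ →₀ ℕ // (f.sum fun x m => w (.inr x) * m) = n}) :
    Finite {f : ι ⊕ κ →₀ ℕ // (f.sum fun x m => w x * m) = n} ∧
    wcount w n = ∑ p ∈ antidiagonal n, wcount (fun x => w (.inl x)) p.1 * wcount (fun x => w (.inr x)) p.2 := by
  refine ⟨Finite.of_equiv _ (splitEquiv w n).symm, ?_⟩
  rw [wcount, Nat.card_congr (splitEquiv w n), Nat.card_sigma, ← Finset.sum_coe_sort (HasAntidiagonal.antidiagonal n)]
  simp only [Nat.card_prod, wcount]

noncomputable def cpEquiv (r : ℕ) : (ℕ+ × Fin r) ⊕ ℕ+ ≃ ℕ+ × Fin (r + 1) :=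
  (Equiv.sumCongr (Equiv.refl _) (Equiv.prodUnique ℕ+ (Fin 1)).symm).trans
    ((Equiv.prodSumDistrib ℕ+ (Fin r) (Fin 1)).symm.trans
      (Equiv.prodCongr (Equiv.refl _) finSumFinEquiv))

lemma cpEquiv_fst (r : ℕ) (x) : (cpEquiv r x).1 = Sum.elim Prod.fst id x := by
  rcases x with x | x <;> simp [cpEquiv]

lemma cp_fin (r : ℕ) : ∀ n, Finite {f : ℕ+ × Fin r →₀ ℕ // (f.sum fun x m => (x.1 : ℕ) * m) = n} := by
  induction r with
  | zero => intro n; infer_instance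
  | succ r ih =>
    intro n
    have := (wcount_sum (fun x => ((cpEquiv r x).1 : ℕ)) n (by simpa [cpEquiv_fst] using ih)
      (by simpa [cpEquiv_fst] using wcount_fin_pnat)).1
    refine Finite.of_equiv _ ((Finsupp.domCongr (cpEquiv r)).toEquiv.subtypeEquiv (p := fun f : (ℕ+ × Fin r) ⊕ ℕ+ →₀ ℕ => (f.sum fun x m => ((cpEquiv r x).1 : ℕ) * m) = n) ?_)
    intro f
    simp [Finsupp.domCongr_apply, Finsupp.equivMapDomain_eq_mapDomain, Finsupp.sum_mapDomain_index_inj (cpEquiv r).injective]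

noncomputable def cp (r n : ℕ) : ℕ := wcount (fun x : ℕ+ × Fin r => (x.1 : ℕ)) n

lemma cp_succ (r n : ℕ) : cp (r + 1) n = ∑ p ∈ antidiagonal n, cp r p.1 * wcount (fun x : ℕ+ => (x : ℕ)) p.2 := by
  rw [cp, ← wcount_equiv (cpEquiv r)]
  rw [(wcount_sum (fun x => ((cpEquiv r x).1 : ℕ)) n (by simpa [cpEquiv_fst] using cp_fin r)
      (by simpa [cpEquiv_fst] using wcount_fin_pnat)).2]
  simp [cpEquiv_fst, cp]

lemma cp_zero (n : ℕ) : cp 0 n = if n = 0 then 1 else 0 := by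
  rw [cp, wcount]
  split_ifs with h
  · subst h
    rw [Nat.card_eq_one_iff_unique]
    refine ⟨inferInstance, ⟨⟨0, by simp⟩⟩⟩
  · rw [Nat.card_eq_zero]
    left
    constructor
    rintro ⟨f, hf⟩
    rw [Subsingleton.elim f 0] at hf
    simp at hf; omega

lemma mset_sum (f : ℕ+ →₀ ℕ) : ((Finsupp.toMultiset f).map (fun x : ℕ+ => (x : ℕ))).sum =
    f.sum fun x m => (x : ℕ) * m := by
  induction f using Finsupp.induction_linear with
  | zero => simp
  | add f g hf hg =>
    rw [map_add, Multiset.map_add, Multiset.sum_add, hf, hg, Finsupp.sum_add_index'] <;> simp [mul_add]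
  | single a b => simp [Finsupp.toMultiset_single, mul_comm, Multiset.map_nsmul, Multiset.sum_nsmul]

noncomputable def partFun (n : ℕ) (f : {f : ℕ+ →₀ ℕ // (f.sum fun x m => (x : ℕ) * m) = n}) : Nat.Partition n where
  parts := (Finsupp.toMultiset f.1).map (fun x : ℕ+ => (x : ℕ))
  parts_pos := by
    intro i hi
    simp only [Multiset.mem_map] at hi
    obtain ⟨a, _, rfl⟩ := hi
    exact a.pos
  parts_sum := by
    exact (mset_sum f.1).trans f.2

lemma partFun_bij (n : ℕ) : Function.Bijective (partFun n) := by
  constructor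
  · intro f g h
    have h1 := congrArg Nat.Partition.parts h
    have h2 := Multiset.map_injective PNat.coe_injective h1
    exact Subtype.ext (Multiset.toFinsupp.symm.injective h2)
  · intro p
    let M : Multiset ℕ+ := p.parts.pmap (fun i hi => (⟨i, hi⟩ : ℕ+)) (fun i hi => p.parts_pos hi)
    have e : M.map (fun x : ℕ+ => (x : ℕ)) = p.parts := by
      have : M.map (fun x : ℕ+ => (x : ℕ)) = p.parts.pmap (fun i _ => i) (fun i hi => p.parts_pos hi) :=
        Multiset.map_pmap _ _ _ _
      exact this.trans ((Multiset.pmap_eq_map _ (fun i : ℕ => i) _ _).trans (Multiset.map_id' _))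
    refine ⟨⟨Multiset.toFinsupp M, ?_⟩, ?_⟩
    · rw [← mset_sum, Multiset.toFinsupp_toMultiset, e, p.parts_sum]
    · apply Nat.Partition.ext
      refine Eq.trans ?_ e
      simp only [partFun, Multiset.toFinsupp_toMultiset]

lemma wcount_part (n : ℕ) : wcount (fun x : ℕ+ => (x : ℕ)) n = Fintype.card (Nat.Partition n) := by
  rw [wcount, Nat.card_eq_of_bijective _ (partFun_bij n), Nat.card_eq_fintype_card]

lemma part_mul_E : (PowerSeries.mk fun n => ((Fintype.card (Nat.Partition n) : ℕ) : ZMod 7)) * EE = 1 := by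
  let : TopologicalSpace (ZMod 7) := ⊥
  have : DiscreteTopology (ZMod 7) := ⟨rfl⟩
  open scoped PowerSeries.WithPiTopology in
  have h1 := Nat.Partition.hasProd_powerSeriesMk_card_restricted (ZMod 7) (fun _ => True)
  open scoped PowerSeries.WithPiTopology in
  have h2 := PowerSeries.WithPiTopology.hasProd_one_sub_X_pow (ZMod 7)
  open scoped PowerSeries.WithPiTopology in
  have h3 := h1.mul h2
  open scoped PowerSeries.WithPiTopology in
  have h4 : HasProd (fun _ : ℕ => (1 : (ZMod 7)⟦X⟧)) 1 := hasProd_one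
  have e : (PowerSeries.mk fun n => ((Fintype.card (Nat.Partition n) : ℕ) : ZMod 7)) = PowerSeries.mk fun n ↦ (#(Nat.Partition.restricted n (fun _ => True)) : ZMod 7) := by
    ext n
    simp [Nat.Partition.restricted]
  rw [e]
  have h5 : (fun b : ℕ => (if True then ∑' (j : ℕ), (X : (ZMod 7)⟦X⟧) ^ ((b + 1) * j) else 1) * (1 - X ^ (b + 1))) = fun _ => 1 := by
    funext b
    rw [if_pos trivial]
    simp only [pow_mul]
    exact PowerSeries.WithPiTopology.tsum_pow_mul_one_sub_of_constantCoeff_eq_zero (by simp)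
  exact (h5 ▸ h3).unique h4

lemma cp_series (r : ℕ) : (PowerSeries.mk fun n => (cp r n : ZMod 7)) * EE ^ r = 1 := by
  induction r with
  | zero =>
    ext n
    simp [cp_zero, coeff_one]
  | succ r ih =>
    have : (PowerSeries.mk fun n => (cp (r + 1) n : ZMod 7)) = (PowerSeries.mk fun n => (cp r n : ZMod 7)) * (PowerSeries.mk fun n => ((Fintype.card (Nat.Partition n) : ℕ) : ZMod 7)) := by
      ext n
      rw [coeff_mul]
      simp [cp_succ, wcount_part]
    rw [this, pow_succ]
    linear_combination (PowerSeries.mk fun n => ((Fintype.card (Nat.Partition n) : ℕ) : ZMod 7)) * EE * ih + part_mul_E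

open Finset PowerSeries

lemma frob (f : (ZMod 7)⟦X⟧) : f ^ 7 = PowerSeries.expand 7 (by norm_num) f := by
  have : MvPowerSeries.map (frobenius (ZMod 7) 7) (MvPowerSeries.expand 7 (by norm_num) f) = f ^ 7 :=
    MvPowerSeries.map_frobenius_expand 7 (by norm_num)
  rw [← this, ZMod.frobenius_zmod, MvPowerSeries.map_id]
  rfl

lemma Cl_pow7 (f : (ZMod 7)⟦X⟧) : Cl 0 (f ^ 7) := by
  intro n hn
  rw [frob, coeff_expand_of_not_dvd]
  rwa [Ne, ZMod.natCast_eq_zero_iff] at hn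

lemma coeff_E49 (n : ℕ) : coeff n (EE ^ 49) = if 49 ∣ n then coeff (n / 49) EE else 0 := by
  rw [show EE ^ 49 = (EE ^ 7) ^ 7 by rw [← pow_mul], frob, frob, ← PowerSeries.expand_mul, coeff_expand]

lemma pent_mod {n : ℕ} {k : ℤ} (h : pentagonal k = n) :
    n % 7 = 0 ∨ n % 7 = 1 ∨ n % 7 = 2 ∧ k % 7 = 6 ∨ n % 7 = 5 := by
  have h2 := two_mul_natCast_pentagonal k
  rw [h] at h2
  have h3 : (2 * (n : ℤ)) % 7 = ((k % 7) * (3 * (k % 7) - 1)) % 7 := by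
    rw [h2]
    simp [Int.mul_emod, Int.sub_emod]
  have l0 : 0 ≤ k % 7 := Int.emod_nonneg _ (by norm_num)
  have l1 : k % 7 < 7 := Int.emod_lt_of_pos _ (by norm_num)
  generalize hm : k % 7 = m at *
  interval_cases m <;> simp at h3 ⊢ <;> omega

lemma pent_seven (l : ℤ) : pentagonal (7 * l - 1) = 49 * pentagonal l + 2 := by
  have h1 := two_mul_natCast_pentagonal (7 * l - 1)
  have h2 := two_mul_natCast_pentagonal l
  have : 2 * (pentagonal (7 * l - 1) : ℤ) = 2 * (49 * pentagonal l + 2) := by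
    rw [h1]; linear_combination (-49) * h2
  omega

lemma negone_seven (l : ℤ) : ((Int.negOnePow (7 * l - 1) : ℤˣ) : ZMod 7) = - ((Int.negOnePow l : ℤˣ) : ZMod 7) := by
  have : Int.negOnePow (7 * l - 1) = - Int.negOnePow l := by
    rw [Int.negOnePow_sub, show 7 * l = 2 * (3 * l) + l by ring, Int.negOnePow_add]
    simp
  rw [this]; simp

lemma zmod_mod (n : ℕ) (r : ℕ) (hr : r < 7) : ((n : ZMod 7) = (r : ZMod 7)) ↔ n % 7 = r := by
  rw [ZMod.natCast_eq_natCast_iff', Nat.mod_eq_of_lt hr]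

lemma E_split : EE = pr 0 EE + pr 1 EE + pr 2 EE + pr 5 EE := by
  ext n
  simp only [map_add, coeff_pr]
  have z0 := zmod_mod n 0 (by norm_num)
  have z1 := zmod_mod n 1 (by norm_num)
  have z2 := zmod_mod n 2 (by norm_num)
  have z5 := zmod_mod n 5 (by norm_num)
  push_cast at z0 z1 z2 z5
  simp only [z0, z1, z2, z5]
  by_cases h : n ∈ Set.range pentagonal
  · obtain ⟨k, hk⟩ := h
    rcases pent_mod hk with h | h | h | h <;> simp [h]
  · rw [PowerSeries.coeff_pentagonalSeries_eq_zero _ h]; simp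

lemma E_two : pr 2 EE = - (X ^ 2 * EE ^ 49) := by
  ext n
  rw [coeff_pr, map_neg, coeff_X_pow_mul', coeff_E49]
  have z2 := zmod_mod n 2 (by norm_num)
  push_cast at z2
  simp only [z2]
  by_cases hn : 2 ≤ n ∧ 49 ∣ n - 2
  · obtain ⟨h2, m, hm⟩ := hn
    obtain rfl : n = 49 * m + 2 := by omega
    rw [if_pos (by omega), if_pos h2, if_pos ⟨m, hm⟩, hm, Nat.mul_div_cancel_left _ (by norm_num)]
    by_cases h : m ∈ Set.range pentagonal
    · obtain ⟨l, rfl⟩ := h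
      rw [← pent_seven, coeff_pentagonalSeries_pentagonal, coeff_pentagonalSeries_pentagonal, negone_seven]
    · rw [coeff_pentagonalSeries_eq_zero _ h, coeff_pentagonalSeries_eq_zero, neg_zero]
      rintro ⟨k, hk⟩
      apply h
      have := pent_mod hk
      obtain ⟨l, rfl⟩ : ∃ l, k = 7 * l - 1 := ⟨(k + 1) / 7, by omega⟩
      rw [pent_seven] at hk
      exact ⟨l, by omega⟩
  · have : (if 2 ≤ n then (if 49 ∣ n - 2 then coeff ((n - 2) / 49) EE else 0) else 0) = 0 := by
      by_cases h2 : 2 ≤ n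
      · rw [if_pos h2, if_neg (fun h => hn ⟨h2, h⟩)]
      · rw [if_neg h2]
    rw [this, neg_zero]
    split_ifs with h7
    · apply coeff_pentagonalSeries_eq_zero
      rintro ⟨k, hk⟩
      apply hn
      have := pent_mod hk
      obtain ⟨l, rfl⟩ : ∃ l, k = 7 * l - 1 := ⟨(k + 1) / 7, by omega⟩
      rw [pent_seven] at hk
      omega
    · rfl

lemma E3_pr (r : ℕ) (hr : r < 7) (h : r ≠ 0 ∧ r ≠ 1 ∧ r ≠ 3) : pr (r : ZMod 7) (EE ^ 3) = 0 := by
  ext n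
  rw [coeff_pr]
  split_ifs with hn
  · rw [zmod_mod n r hr] at hn
    rw [E3_supp n (by omega)]; simp
  · simp

lemma seven0 : (7 : (ZMod 7)⟦X⟧) = 0 := by
  have : (7 : ZMod 7) = 0 := by decide
  rw [← map_ofNat (C : ZMod 7 →+* (ZMod 7)⟦X⟧), this, map_zero]

lemma T_sq : (pr 3 (EE ^ 5)) ^ 2 = 2 * X ^ 6 * EE ^ 154 := by
  have ha := Cl_pr 0 EE
  have hb := Cl_pr 1 EE
  have hc := Cl_pr 2 EE
  have hd := Cl_pr 5 EE
  have hE := E_split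
  have h2 := E_two
  generalize pr 0 EE = a at *
  generalize pr 1 EE = b at *
  generalize pr 2 EE = c at *
  generalize pr 5 EE = d at *
  have r2 := rel2 ha hb hc hd (by rw [← hE]; exact_mod_cast E3_pr 2 (by norm_num) (by norm_num))
  have r4 := rel4 ha hb hc hd (by rw [← hE]; exact_mod_cast E3_pr 4 (by norm_num) (by norm_num))
  have r5 := rel5 ha hb hc hd (by rw [← hE]; exact_mod_cast E3_pr 5 (by norm_num) (by norm_num))
  have r6 := rel6 ha hb hc hd (by rw [← hE]; exact_mod_cast E3_pr 6 (by norm_num) (by norm_num))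
  have hT : pr 3 (EE ^ 5) = pr 3 ((a + b + c + d) ^ 5) := by rw [← hE]
  rw [hT, pr_five ha hb hc hd]
  have hA := alg a b c d seven0 r2 r4 r5 r6
  have hF : EE ^ 7 = a ^ 7 + b ^ 7 + c ^ 7 + d ^ 7 := by
    rw [hE]; simp only [frob, map_add]
  rw [← hF] at hA
  rw [eq_neg_of_add_eq_zero_left hA, h2]
  ring

lemma S_eq (U : (ZMod 7)⟦X⟧) (hU : U * EE = 1) :
    ∃ e : ZMod 7, pr 3 (U ^ 2) = X ^ 3 * (C e * EE ^ 70) := by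
  have h1 : EE ^ 5 = EE ^ 7 * U ^ 2 := by
    calc EE ^ 5 = EE ^ 5 * (U * EE) ^ 2 := by rw [hU]; ring
      _ = _ := by ring
  have h2 := T_sq
  rw [h1, pr_mul (Cl_pow7 EE)] at h2
  set S := pr 3 (U ^ 2)
  have h3 : S ^ 2 = (3 * (X ^ 3 * EE ^ 70)) ^ 2 := by
    apply mul_left_cancel₀ (pow_ne_zero 14 unitE.ne_zero)
    linear_combination h2 - X ^ 6 * EE ^ 154 * seven0
  rcases sq_eq_sq_iff_eq_or_eq_neg.mp h3 with h | h
  · exact ⟨3, by rw [h, map_ofNat]; ring⟩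
  · exact ⟨-3, by rw [h, map_neg, map_ofNat]; ring⟩

theorem colouredPartitions_cong_mod7_49k2 (k n j : ℕ) (hj : j = 2 ∨ j = 4 ∨ j = 5 ∨ j = 6) :
    7 ∣ colouredPartitions (49 * k + 2) (49 * n + 7 * j + 3) := by
  rw [← ZMod.natCast_eq_zero_iff]
  change ((cp (49 * k + 2) (49 * n + 7 * j + 3) : ℕ) : ZMod 7) = 0
  have hG := cp_series (49 * k + 2)
  set G := PowerSeries.mk fun n => (cp (49 * k + 2) n : ZMod 7) with hGdef
  have hc : ((cp (49 * k + 2) (49 * n + 7 * j + 3) : ℕ) : ZMod 7) = coeff (49 * n + 7 * j + 3) G := by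
    rw [hGdef, coeff_mk]
  rw [hc]
  obtain ⟨U, hU'⟩ := unitE.exists_left_inv
  obtain ⟨e, he⟩ := S_eq U hU'
  have hGU : G = (U ^ (7 * k)) ^ 7 * U ^ 2 := by
    calc G = G * (U * EE) ^ (49 * k + 2) := by rw [hU', one_pow, mul_one]
      _ = (G * EE ^ (49 * k + 2)) * U ^ (49 * k + 2) := by rw [mul_pow]; ring
      _ = _ := by rw [hG, one_mul, ← pow_mul, ← pow_add]; congr 1; ring
  have h3 : pr 3 G = X ^ 3 * (C e * ((U ^ k * EE) ^ 7 * EE ^ 3) ^ 7) := by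
    rw [hGU, pr_mul (Cl_pow7 _), he]; ring
  have hz : ((49 * n + 7 * j + 3 : ℕ) : ZMod 7) = 3 := by
    have := (zmod_mod (49 * n + 7 * j + 3) 3 (by norm_num)).mpr (by omega)
    exact_mod_cast this
  have h4 : coeff (49 * n + 7 * j + 3) G = coeff (49 * n + 7 * j + 3) (pr 3 G) := by
    rw [coeff_pr, if_pos hz]
  rw [h4, h3, coeff_X_pow_mul, coeff_C_mul, frob, show 49 * n + 7 * j = 7 * (7 * n + j) by ring,
    coeff_expand_mul]
  have hzj : ((7 * n + j : ℕ) : ZMod 7) = (j : ZMod 7) :=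
    (zmod_mod _ j (by omega)).mpr (by omega)
  have h5 : coeff (7 * n + j) ((U ^ k * EE) ^ 7 * EE ^ 3) =
      coeff (7 * n + j) (pr (j : ZMod 7) ((U ^ k * EE) ^ 7 * EE ^ 3)) := by
    rw [coeff_pr, if_pos hzj]
  rw [h5, pr_mul (Cl_pow7 _), E3_pr j (by omega) (by omega)]
  simp
end

section
/- For every non-negative integer k and every non-negative integer n, the number of (49k+5)-colour partitions of 49n+39 is divisible by 7; that is, p_{49k+5}(49n+39) ≡ 0 (mod 7). -/
namespace CP7
open PowerSeries Finset

instance fact7 : Fact (Nat.Prime 7) := ⟨by norm_num⟩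

/-- finite Euler product -/
noncomputable def E (m : ℕ) : (ZMod 7)⟦X⟧ := ∏ i ∈ range m, (1 - X ^ (i + 1))

/-- Euler function -/
noncomputable def F : (ZMod 7)⟦X⟧ := pentagonalSeries (ZMod 7)

lemma E_succ (m : ℕ) : E (m + 1) = E m * (1 - X ^ (m + 1)) := by
  simp [E, prod_range_succ]

lemma coeff_E_succ {m e : ℕ} (h : e ≤ m) : coeff e (E (m + 1)) = coeff e (E m) := by
  rw [E_succ, mul_sub, mul_one, map_sub, mul_comm, coeff_X_pow_mul', if_neg (by omega), sub_zero]

lemma coeff_E_stable {e : ℕ} : ∀ m, e ≤ m → coeff e (E m) = coeff e (E e) := by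
  intro m hm
  induction m, hm using Nat.le_induction with
  | base => rfl
  | succ m hm ih => rw [coeff_E_succ hm, ih]

lemma coeff_E {e m : ℕ} (h : e ≤ m) : coeff e (E m) = coeff e F := by
  have h1 := coeff_prod_one_sub_X_pow_eventually_eq (ZMod 7) e
  have h2 := Filter.tendsto_finset_range.eventually h1
  obtain ⟨N, hN⟩ := Filter.eventually_atTop.mp h2
  have h3 := hN (max N e) (le_max_left _ _)
  change coeff e (E (max N e)) = coeff e F at h3
  rw [coeff_E_stable m h, ← coeff_E_stable _ (le_max_right N e), h3]

lemma E_dvd {e m : ℕ} (h : e ≤ m) : (X : (ZMod 7)⟦X⟧) ^ (e + 1) ∣ E m - F := by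
  rw [X_pow_dvd_iff]
  intro i hi
  rw [map_sub, coeff_E (by omega), sub_self]

lemma coeff_eq_of_dvd {e : ℕ} {a b : (ZMod 7)⟦X⟧} (h : X ^ (e + 1) ∣ a - b) {i : ℕ} (hi : i ≤ e) :
    coeff i a = coeff i b := by
  have := X_pow_dvd_iff.mp h i (by omega)
  rwa [map_sub, sub_eq_zero] at this

lemma cc_E (m : ℕ) : constantCoeff (E m) = 1 := by
  simp [E, map_prod]

lemma cc_F : constantCoeff F = 1 := by
  rw [← coeff_zero_eq_constantCoeff_apply, ← coeff_E (le_refl 0)]; simp [E]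

lemma F_mul_inv : F * F⁻¹ = 1 := PowerSeries.mul_inv_cancel _ (by rw [cc_F]; exact one_ne_zero)

lemma E_mul_inv (m : ℕ) : E m * (E m)⁻¹ = 1 :=
  PowerSeries.mul_inv_cancel _ (by rw [cc_E]; exact one_ne_zero)

/-- Gaussian binomial -/
noncomputable def B (k l : ℕ) : (ZMod 7)⟦X⟧ := E (k + l) * (E k)⁻¹ * (E l)⁻¹

lemma B_comm (k l : ℕ) : B k l = B l k := by
  unfold B; rw [add_comm]; ring

lemma E_zero : E 0 = 1 := by simp [E]

lemma one_inv : (1 : (ZMod 7)⟦X⟧)⁻¹ = 1 := by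
  have := E_mul_inv 0
  rwa [E_zero, one_mul] at this

lemma B_zero_left (l : ℕ) : B 0 l = 1 := by
  simp [B, E_zero, one_inv, E_mul_inv]

lemma B_zero_right (l : ℕ) : B l 0 = 1 := by rw [B_comm, B_zero_left]

lemma inv_E (k : ℕ) : (E k)⁻¹ = (1 - X ^ (k + 1)) * (E (k + 1))⁻¹ := by
  have h1 := E_mul_inv k
  have h2 := E_mul_inv (k + 1)
  rw [E_succ] at h2 ⊢
  linear_combination (-(E k)⁻¹) * h2 + (1 - X ^ (k + 1)) * (E k * (1 - X ^ (k + 1)))⁻¹ * h1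

lemma B_pascal (k l : ℕ) : B (k + 1) (l + 1) = B k (l + 1) + X ^ (k + 1) * B (k + 1) l := by
  unfold B
  rw [inv_E k, inv_E l, show k + 1 + (l + 1) = (k + l + 1) + 1 by ring, E_succ,
    show k + (l + 1) = k + l + 1 by ring, show k + 1 + l = k + l + 1 by ring]
  ring

lemma rothe {S : Type*} [CommRing S] (φ : (ZMod 7)⟦X⟧ →+* S) (y : S) (m : ℕ) : ∀ x : S,
    ∏ i ∈ range m, (y + x * φ (X ^ i)) =
      ∑ p ∈ antidiagonal m, φ (X ^ (p.1.choose 2) * B p.1 p.2) * x ^ p.1 * y ^ p.2 := by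
  induction m with
  | zero => intro x; simp [B_zero_left]
  | succ m ih =>
    intro x
    let G1 : ℕ × ℕ → S := fun p => match p with
      | (_, 0) => 0
      | (k, l + 1) => φ (X ^ (k.choose 2 + k) * B k l) * x ^ k * y ^ (l + 1)
    let G2 : ℕ × ℕ → S := fun p => match p with
      | (0, _) => 0
      | (k + 1, l) => φ (X ^ (k.choose 2 + k) * B k l) * x ^ (k + 1) * y ^ l
    have hG : ∀ p ∈ antidiagonal (m + 1),
        φ (X ^ (p.1.choose 2) * B p.1 p.2) * x ^ p.1 * y ^ p.2 = G1 p + G2 p := by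
      rintro ⟨k, l⟩ hp
      rcases k with _ | k
      · rcases l with _ | l
        · simp at hp
        · simp [G1, G2, B_zero_left]
      · have hc : (k + 1).choose 2 = k.choose 2 + k := by
          rw [Nat.choose_succ_succ' k 1, Nat.choose_one_right, add_comm]
        rcases l with _ | l
        · simp [G1, G2, B_zero_right, hc]
        · simp only [G1, G2, B_pascal, hc, map_mul, map_add, pow_add]
          ring
    rw [sum_congr rfl hG, sum_add_distrib, Finset.Nat.sum_antidiagonal_succ' (f := G1),
      Finset.Nat.sum_antidiagonal_succ (f := G2), prod_range_succ']
    have := ih (x * φ X)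
    have h2 : ∀ i, y + x * φ (X ^ (i + 1)) = y + x * φ X * φ (X ^ i) := by
      intro i; rw [pow_succ, map_mul]; ring
    simp only [h2, this]
    simp only [G1, G2, zero_add, ← sum_add_distrib, sum_mul]
    refine sum_congr rfl ?_
    rintro ⟨k, l⟩ -
    simp only [map_mul, map_pow, pow_add]
    simp
    ring

lemma prod_left (n : ℕ) : ∏ i ∈ range n, ((X : (ZMod 7)⟦X⟧) ^ n - X ^ i) =
    (-1) ^ n * X ^ (n.choose 2) * E n := by
  have h : ∀ i ∈ range n, ((X : (ZMod 7)⟦X⟧) ^ n - X ^ i) = (-1) * X ^ i * (1 - X ^ (n - 1 - i + 1)) := by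
    intro i hi
    have hi := mem_range.mp hi
    have : n = i + (n - 1 - i + 1) := by omega
    conv_lhs => rw [this, pow_add]
    ring
  rw [prod_congr rfl h, prod_mul_distrib, prod_mul_distrib, prod_const, card_range, prod_pow_eq_pow_sum,
    prod_range_reflect (fun i => (1 - (X : (ZMod 7)⟦X⟧) ^ (i + 1))) n, E, sum_range_id, Nat.choose_two_right]

lemma prod_right (n : ℕ) : ∏ i ∈ range n, ((X : (ZMod 7)⟦X⟧) ^ n - X ^ (n + 1 + i)) =
    X ^ (n * n) * E n := by
  have h : ∀ i ∈ range n, ((X : (ZMod 7)⟦X⟧) ^ n - X ^ (n + 1 + i)) = X ^ n * (1 - X ^ (i + 1)) := by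
    intro i _; ring
  rw [prod_congr rfl h, prod_mul_distrib, prod_const, card_range, E, pow_mul]

lemma finite_jacobi (n : ℕ) :
    (-1) ^ (n + 1) * X ^ (n + n * n + n.choose 2) * E n ^ 2 =
      ∑ p ∈ antidiagonal (2 * n + 1), X ^ (p.1.choose 2 + n * p.2) * B p.1 p.2 *
        ((-1) ^ p.1 * (p.1 : (ZMod 7)⟦X⟧)) := by
  have h := rothe (Polynomial.C : (ZMod 7)⟦X⟧ →+* _) (Polynomial.C (X ^ n)) (2 * n + 1) (-Polynomial.X)
  have h' := congrArg (fun p => Polynomial.eval 1 (Polynomial.derivative p)) h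
  have hr : ∏ i ∈ range (2 * n + 1), (Polynomial.C ((X : (ZMod 7)⟦X⟧) ^ n) + -Polynomial.X * Polynomial.C (X ^ i))
     = ((1 - Polynomial.X) * Polynomial.C (X ^ n)) *
      ((∏ i ∈ range n, (Polynomial.C ((X : (ZMod 7)⟦X⟧) ^ n) + -Polynomial.X * Polynomial.C (X ^ i)))
      * (∏ i ∈ range n, (Polynomial.C ((X : (ZMod 7)⟦X⟧) ^ n) + -Polynomial.X * Polynomial.C (X ^ (n + 1 + i))))) := by
    rw [show 2 * n + 1 = n + 1 + n by ring, prod_range_add, prod_range_succ]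
    ring
  rw [hr] at h'
  simp only [Polynomial.derivative_mul, Polynomial.eval_add, Polynomial.eval_mul, Polynomial.derivative_sub,
    Polynomial.derivative_one, Polynomial.derivative_X, Polynomial.eval_sub, Polynomial.eval_one, Polynomial.eval_X,
    Polynomial.derivative_C, Polynomial.eval_C, Polynomial.eval_prod, Polynomial.eval_neg, Polynomial.eval_zero,
    sub_self, zero_mul, mul_zero, add_zero, zero_sub, neg_mul, one_mul, ← sub_eq_add_neg, prod_left, prod_right] at h'
  have e1 : (-1 : (ZMod 7)⟦X⟧) ^ (n + 1) * X ^ (n + n * n + n.choose 2) * E n ^ 2 =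
      -(X ^ n * ((-1) ^ n * X ^ n.choose 2 * E n * (X ^ (n * n) * E n))) := by ring
  rw [e1, h', Polynomial.derivative_sum, Polynomial.eval_finsetSum]
  refine sum_congr rfl ?_
  rintro ⟨k, l⟩ -
  have e2 : (-Polynomial.X : Polynomial (ZMod 7)⟦X⟧) ^ k = Polynomial.C ((-1) ^ k) * Polynomial.X ^ k := by
    rw [neg_pow (Polynomial.X : Polynomial (ZMod 7)⟦X⟧) k]; simp only [map_pow, map_neg, map_one]
  simp only [e2, ← Polynomial.C_pow]
  simp only [Polynomial.derivative_mul, Polynomial.derivative_C, Polynomial.derivative_X_pow]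
  simp
  ring

lemma two_choose (k : ℕ) : 2 * ((k.choose 2 : ℕ) : ℤ) = k * (k - 1) := by
  induction k with
  | zero => simp
  | succ k ih =>
    rw [Nat.choose_succ_succ' k 1, Nat.choose_one_right]
    push_cast
    linarith

lemma expo {k l n : ℕ} (h : k + l = 2 * n + 1) :
    8 * ((k.choose 2 + n * l : ℕ) : ℤ) + 1 =
      8 * ((n + n * n + n.choose 2 : ℕ) : ℤ) + ((k : ℤ) - l) ^ 2 := by
  have h1 := two_choose k
  have h2 := two_choose n
  have h3 : (l : ℤ) = 2 * n + 1 - k := by have : (k : ℤ) + l = 2 * n + 1 := by exact_mod_cast h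
                                          linarith
  push_cast
  rw [h3]
  linear_combination 4 * h1 - 4 * h2

lemma jacobi_sym (n : ℕ) :
    2 * ((-1) ^ (n + 1) * X ^ (n + n * n + n.choose 2) * E n ^ 2) =
      ∑ p ∈ antidiagonal (2 * n + 1), X ^ (p.1.choose 2 + n * p.2) * B p.1 p.2 *
        ((-1) ^ p.1 * ((p.1 : (ZMod 7)⟦X⟧) - (p.2 : (ZMod 7)⟦X⟧))) := by
  rw [two_mul, finite_jacobi]
  nth_rw 2 [← Finset.Nat.sum_antidiagonal_swap]
  rw [← sum_add_distrib]
  refine sum_congr rfl ?_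
  rintro ⟨k, l⟩ hp
  simp only [HasAntidiagonal.mem_antidiagonal] at hp
  simp only [Prod.swap, B_comm l k]
  have hexp : l.choose 2 + n * k = k.choose 2 + n * l := by
    have h1 := expo (k := l) (l := k) (n := n) (by omega)
    have h2 := expo (k := k) (l := l) (n := n) (by omega)
    have h3 : ((k : ℤ) - l) ^ 2 = ((l : ℤ) - k) ^ 2 := by ring
    zify
    push_cast at h1 h2
    linarith
  have hs : (-1 : (ZMod 7)⟦X⟧) ^ l = - (-1) ^ k := by
    have : Odd (k + l) := ⟨n, by omega⟩
    have h := this.neg_one_pow (α := (ZMod 7)⟦X⟧)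
    rw [pow_add] at h
    have h2 : (-1 : (ZMod 7)⟦X⟧) ^ k * (-1) ^ k = 1 := by rw [← mul_pow]; simp
    linear_combination (-1) ^ k * h - (-1) ^ l * h2
  rw [hexp, hs]
  ring

lemma B_mul_F {e k l : ℕ} (hk : e ≤ k) (hl : e ≤ l) :
    (X : (ZMod 7)⟦X⟧) ^ (e + 1) ∣ B k l * F - 1 := by
  obtain ⟨a, ha⟩ := E_dvd hk
  obtain ⟨b, hb⟩ := E_dvd hl
  obtain ⟨c, hc⟩ := E_dvd (show e ≤ k + l by omega)
  have h1 := E_mul_inv k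
  have h2 := E_mul_inv l
  refine ⟨(E k)⁻¹ * (E l)⁻¹ * (c * F - a * E l - F * b), ?_⟩
  unfold B
  linear_combination (E k)⁻¹ * (E l)⁻¹ * (F * hc - E l * ha - F * hb) + h1 * E l * (E l)⁻¹ + h2

lemma sq_mod (a b : ℕ) (e : ℕ) (hab : ((a : ZMod 7) - (b : ZMod 7)) ≠ 0)
    (h : 8 * (e : ℤ) + 1 = ((a : ℤ) - b) ^ 2) : e % 7 = 0 ∨ e % 7 = 1 ∨ e % 7 = 3 := by
  have h' := congrArg (Int.cast : ℤ → ZMod 7) h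
  push_cast at h'
  generalize (a : ZMod 7) - (b : ZMod 7) = x at *
  have key : ∀ x y : ZMod 7, x ≠ 0 → 8 * y + 1 = x ^ 2 → y.val = 0 ∨ y.val = 1 ∨ y.val = 3 := by
    decide
  have := key x e hab h'
  rwa [ZMod.val_natCast] at this

lemma F3_support {e : ℕ} (he : coeff e (F ^ 3) ≠ 0) : e % 7 = 0 ∨ e % 7 = 1 ∨ e % 7 = 3 := by
  by_contra hcon
  apply he
  set n := 2 * e + 1 with hn
  set N := n + n * n + n.choose 2 with hN
  have hj := jacobi_sym n
  rw [← hN] at hj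
  have hR : coeff (e + N) ((2 * ((-1) ^ (n + 1) * X ^ N * E n ^ 2)) * F) = 0 := by
    rw [hj, sum_mul, map_sum]
    refine sum_eq_zero ?_
    rintro ⟨k, l⟩ hp
    simp only [HasAntidiagonal.mem_antidiagonal] at hp
    dsimp only
    have hx := expo hp
    rw [← hN] at hx
    set D := k.choose 2 + n * l with hD
    have e1 : (X : (ZMod 7)⟦X⟧) ^ D * B k l * ((-1) ^ k * ((k : (ZMod 7)⟦X⟧) - (l : (ZMod 7)⟦X⟧))) * F
      = C ((-1) ^ k * ((k : ZMod 7) - (l : ZMod 7))) * (X ^ D * (B k l * F)) := by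
      simp only [map_mul, map_sub, map_pow, map_neg, map_one, map_natCast]
      ring
    rw [e1, coeff_C_mul, coeff_X_pow_mul']
    split_ifs with hle
    · by_cases hz : (k : ZMod 7) - (l : ZMod 7) = 0
      · rw [hz]; simp
      have hsq : ((k : ℤ) - l) ^ 2 ≤ 8 * e + 1 := by
        have : (D : ℤ) ≤ e + N := by exact_mod_cast hle
        linarith
      have hlt : |((k : ℤ) - l)| ≤ 2 * e + 1 := by
        apply abs_le_of_sq_le_sq _ (by positivity)
        rcases Nat.eq_zero_or_pos e with h0 | h0
        · subst h0; simpa using hsq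
        · have : (1 : ℤ) ≤ e := by exact_mod_cast h0
          nlinarith
      have hlt := abs_le.mp hlt
      have hB := B_mul_F (e := e) (k := k) (l := l) (by omega) (by omega)
      have hND : N ≤ D := by
        have : 0 < ((k : ℤ) - l) ^ 2 := by
          have : (k : ℤ) - l ≠ 0 := by omega
          positivity
        zify; omega
      rw [coeff_eq_of_dvd hB (by omega), coeff_one]
      split_ifs with hDe
      · exfalso
        apply hcon
        refine sq_mod k l e hz ?_
        have : (D : ℤ) = e + N := by have : D = e + N := by omega
                                     exact_mod_cast this
        linarith
      · simp
    · simp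
  have e2 : (2 * ((-1) ^ (n + 1) * X ^ N * E n ^ 2)) * F =
      C (2 * (-1) ^ (n + 1)) * (X ^ N * (E n ^ 2 * F)) := by
    simp only [map_mul, map_pow, map_neg, map_one, map_ofNat]
    ring
  have hd : (X : (ZMod 7)⟦X⟧) ^ (e + 1) ∣ E n ^ 2 * F - F ^ 3 := by
    have := E_dvd (show e ≤ n by omega)
    rw [show E n ^ 2 * F - F ^ 3 = (E n - F) * ((E n + F) * F) by ring]
    exact Dvd.dvd.mul_right this _
  rw [e2, coeff_C_mul, coeff_X_pow_mul, coeff_eq_of_dvd hd le_rfl] at hR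
  rcases mul_eq_zero.mp hR with h | h
  · exfalso
    rcases mul_eq_zero.mp h with h | h
    · revert h; decide
    · exact pow_ne_zero _ (by decide) h
  · exact h

lemma coeff_mul_ne {a b : (ZMod 7)⟦X⟧} {e : ℕ} (h : coeff e (a * b) ≠ 0) :
    ∃ i j, i + j = e ∧ coeff i a ≠ 0 ∧ coeff j b ≠ 0 := by
  rw [coeff_mul] at h
  obtain ⟨⟨i, j⟩, hp, hne⟩ := exists_ne_zero_of_sum_ne_zero h
  exact ⟨i, j, by simpa using hp, left_ne_zero_of_mul hne, right_ne_zero_of_mul hne⟩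

lemma coeff_pow7 {g : (ZMod 7)⟦X⟧} {e : ℕ} (h : coeff e (g ^ 7) ≠ 0) :
    ∃ c, e = 7 * c ∧ coeff c g ≠ 0 := by
  have h1 : (expand 7 (by norm_num) g).map (frobenius (ZMod 7) 7) = g ^ 7 :=
    MvPowerSeries.map_frobenius_expand 7 (by norm_num)
  rw [← h1, ZMod.frobenius_zmod, PowerSeries.map_id, id, coeff_expand] at h
  split_ifs at h with hd
  · obtain ⟨c, rfl⟩ := hd
    exact ⟨c, rfl, by simpa using h⟩
  · exact absurd rfl h

lemma F_support {e : ℕ} (h : coeff e F ≠ 0) :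
    e % 7 = 0 ∨ e % 7 = 1 ∨ e % 7 = 5 ∨ e % 49 = 2 := by
  have : e ∈ Set.range pentagonal := by
    by_contra hc
    exact h (coeff_pentagonalSeries_eq_zero _ hc)
  obtain ⟨k, rfl⟩ := this
  have h2 := congrArg (Int.cast : ℤ → ZMod 49) (two_mul_natCast_pentagonal k)
  push_cast at h2
  have key : ∀ x : ZMod 49, (25 * (x * (3 * x - 1))).val % 7 = 0 ∨ (25 * (x * (3 * x - 1))).val % 7 = 1 ∨
    (25 * (x * (3 * x - 1))).val % 7 = 5 ∨ (25 * (x * (3 * x - 1))).val = 2 := by decide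
  have h3 : ((pentagonal k : ℕ) : ZMod 49) = 25 * ((k : ZMod 49) * (3 * k - 1)) := by
    rw [← h2, ← mul_assoc, show (25 * 2 : ZMod 49) = 1 by decide, one_mul]
  have h4 := key k
  rw [← h3, ZMod.val_natCast] at h4
  omega

lemma main_coeff (k n : ℕ) : coeff (49 * n + 39) (F⁻¹ ^ (49 * k + 5)) = 0 := by
  by_contra h
  have e1 : F⁻¹ ^ (49 * k + 5) = F * F * ((F ^ 3 * F ^ 3) ^ 7 * ((F⁻¹ ^ (k + 1)) ^ 7) ^ 7) := by
    have h44 : (F * F⁻¹) ^ 44 = 1 := by rw [F_mul_inv, one_pow]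
    rw [mul_pow] at h44
    linear_combination (-(F⁻¹ ^ (49 * k + 5))) * h44
  rw [e1] at h
  obtain ⟨a, b, hab, ha, hb⟩ := coeff_mul_ne h
  obtain ⟨a1, a2, ha12, ha1, ha2⟩ := coeff_mul_ne ha
  obtain ⟨c, d, hcd, hc', hd'⟩ := coeff_mul_ne hb
  obtain ⟨c, rfl, hc⟩ := coeff_pow7 hc'
  obtain ⟨d, rfl, hd⟩ := coeff_pow7 hd'
  obtain ⟨d', rfl, -⟩ := coeff_pow7 hd
  obtain ⟨c1, c2, hc12, hc1, hc2⟩ := coeff_mul_ne hc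
  have := F_support ha1
  have := F_support ha2
  have := F3_support hc1
  have := F3_support hc2
  omega

lemma geom_mul {m : ℕ} (hm : 0 < m) :
    (PowerSeries.mk fun i => if m ∣ i then (1 : ZMod 7) else 0) * (1 - X ^ m) = 1 := by
  ext e
  rw [mul_sub, mul_one, map_sub, mul_comm, coeff_X_pow_mul', coeff_mk, coeff_one]
  by_cases h0 : e = 0
  · subst h0; simp; omega
  · rw [if_neg h0]
    by_cases hle : m ≤ e
    · rw [if_pos hle, coeff_mk]
      have : m ∣ e - m ↔ m ∣ e := by rw [Nat.dvd_sub_iff_left hle dvd_rfl]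
      simp only [this, sub_self]
    · rw [if_neg hle, if_neg (fun hd => hle (Nat.le_of_dvd (by omega) hd))]; simp

/-- the finite set of relevant coloured parts -/
def S (r n : ℕ) : Finset (ℕ+ × Fin r) := (range n).map ⟨Nat.succPNat, Nat.succPNat_injective⟩ ×ˢ univ

lemma mem_S {r n : ℕ} (x : ℕ+ × Fin r) : x ∈ S r n ↔ (x.1 : ℕ) ≤ n := by
  simp only [S, mem_product, mem_map, mem_range, mem_univ, and_true, Function.Embedding.coeFn_mk]
  constructor
  · rintro ⟨a, ha, h⟩
    rw [← h]; simp; omega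
  · intro h
    exact ⟨x.1.natPred, by have := x.1.natPred_add_one; omega, by simp⟩

lemma cp_eq (r n : ℕ) : (colouredPartitions r n : ZMod 7) = coeff n (∏ x ∈ S r n,
    (PowerSeries.mk fun i => if (x.1 : ℕ) ∣ i then (1 : ZMod 7) else 0)) := by
  classical
  rw [PowerSeries.coeff_prod]
  simp only [coeff_mk, prod_ite_zero, prod_const_one]
  rw [sum_boole]
  congr 1
  rw [colouredPartitions, ← Nat.card_eq_finsetCard]
  refine Nat.card_congr
    { toFun := fun f => ⟨Finsupp.onFinset f.1.support (fun x => (x.1 : ℕ) * f.1 x) ?_, ?_⟩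
      invFun := fun l => ⟨Finsupp.onFinset l.1.support (fun x => l.1 x / (x.1 : ℕ)) ?_, ?_⟩
      left_inv := ?_
      right_inv := ?_ }
  · intro x hx
    simpa using right_ne_zero_of_mul hx
  · obtain ⟨f, hf⟩ := f
    have hsub : f.support ⊆ S r n := by
      intro x hx
      rw [mem_S, ← hf]
      have h1 : (x.1 : ℕ) * f x ≤ f.sum fun x m => (x.1 : ℕ) * m :=
        single_le_sum (f := fun x => (x.1 : ℕ) * f x) (fun _ _ => Nat.zero_le _) hx
      have h2 : 0 < f x := Nat.pos_of_ne_zero (by simpa using hx)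
      exact le_trans (Nat.le_mul_of_pos_right _ h2) h1
    rw [mem_filter, mem_finsuppAntidiag]
    refine ⟨⟨?_, Finsupp.support_onFinset_subset.trans hsub⟩, fun i _ => ?_⟩
    · refine Eq.trans ?_ hf
      refine (sum_subset hsub ?_).symm
      intro x _ hx
      have : f x = 0 := by simpa using hx
      simp [this]
    · simp
  · intro x hx
    have : l.1 x ≠ 0 := by
      intro h0; rw [h0] at hx; simp at hx
    simpa using this
  · obtain ⟨l, hl⟩ := l
    rw [mem_filter, mem_finsuppAntidiag'] at hl
    obtain ⟨⟨h1, h2⟩, h3⟩ := hl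
    refine Eq.trans ?_ h1
    have hval : ∀ x ∈ l.support, (x.1 : ℕ) * (l x / (x.1 : ℕ)) = l x := fun x hx =>
      Nat.mul_div_cancel' (h3 x (h2 hx))
    refine Eq.trans ?_ (sum_congr rfl hval)
    refine sum_subset Finsupp.support_onFinset_subset ?_
    intro x _ hx
    rw [Finsupp.notMem_support_iff] at hx
    exact mul_eq_zero_of_right _ hx
  · rintro ⟨f, hf⟩
    ext x
    simp
  · rintro ⟨l, hl⟩
    rw [mem_filter, mem_finsuppAntidiag'] at hl
    obtain ⟨⟨h1, h2⟩, h3⟩ := hl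
    ext x
    simp only [Finsupp.onFinset_apply]
    by_cases hx : x ∈ l.support
    · exact Nat.mul_div_cancel' (h3 x (h2 hx))
    · have : l x = 0 := by simpa using hx
      simp [this]

lemma prod_S (r n : ℕ) : (∏ x ∈ S r n,
    (PowerSeries.mk fun i => if (x.1 : ℕ) ∣ i then (1 : ZMod 7) else 0)) * E n ^ r = 1 := by
  have : E n ^ r = ∏ x ∈ S r n, (1 - X ^ (x.1 : ℕ)) := by
    rw [S, prod_product]
    simp [E, prod_pow]
  rw [this, ← prod_mul_distrib]
  exact prod_eq_one fun x _ => geom_mul x.1.pos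

lemma cp_coeff (r n : ℕ) : (colouredPartitions r n : ZMod 7) = coeff n (F⁻¹ ^ r) := by
  rw [cp_eq]
  apply coeff_eq_of_dvd (e := n) _ le_rfl
  have h1 := prod_S r n
  generalize (∏ x ∈ S r n, _ : (ZMod 7)⟦X⟧) = P at *
  have h2 : (F * F⁻¹) ^ r = 1 := by rw [F_mul_inv, one_pow]
  rw [mul_pow] at h2
  have h3 : (X : (ZMod 7)⟦X⟧) ^ (n + 1) ∣ E n ^ r - F ^ r :=
    (E_dvd le_rfl).trans (sub_dvd_pow_sub_pow _ _ _)
  have : P - F⁻¹ ^ r = (E n ^ r - F ^ r) * (- P * F⁻¹ ^ r) := by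
    linear_combination F⁻¹ ^ r * h1 - P * h2
  rw [this]
  exact Dvd.dvd.mul_right h3 _

end CP7

theorem colouredPartitions_cong_mod7_49k5 (k n : ℕ) :
    7 ∣ colouredPartitions (49 * k + 5) (49 * n + 39) := by
  rw [← ZMod.natCast_eq_zero_iff, CP7.cp_coeff, CP7.main_coeff]
end
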